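/- Let λ be a real number with λ > -1/2. Then liminf_{n→∞} (c_n(λ))²/n⁴ ≥ 1/((2λ+1)(2λ+5)) and limsup_{n→∞} (c_n(λ))²/n⁴ ≤ 1/(2(2λ+1)√(2λ+5)); moreover, if λ ≥ 2, then limsup_{n→∞} (c_n(λ))²/n⁴ ≤ 1/((λ+2)(λ+3)). (In particular, the asymptotic Markov constant c_*(λ) = lim_{n→∞} c_n(λ)/n², whenever it exists, satisfies 1/((2λ+1)(2λ+5)) ≤ (c_*(λ))² ≤ 1/(2(2λ+1)√(2λ+5)), with the improved upper bound 1/((λ+2)(λ+3)) for λ ≥ 2.) -/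

import Mathlib

/-!
Expand a polynomial `p` in Gegenbauer polynomials. Up to a factor independent of `p`, the `j`-th
coefficient of `p'` is the tail sum of the coefficients of `p` at the indices above `j` of the
opposite parity. By orthogonality, `c_{2m}(λ)²` is therefore the best constant common to two
discrete weighted Hardy inequalities on `m` terms, one for each parity.

Both pairs of weights are asymptotically powers of the index, with the same exponents. The Hardy
constant is bounded above by a Hilbert–Schmidt norm, or for large `λ` by a Schur test with the
increments of `-(k + 1)^{-q}` (the optimal choice is `q = λ - 3/2`), and below by the quotient at
the increments of `k^4`. All three bounds have order `m^4`, with explicit leading constants.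
-/

open Polynomial Filter

/-- The weighted `L_2` norm with the Gegenbauer weight `w_lam(t) = (1-t^2)^(lam-1/2)`. -/
noncomputable def gegNorm (lam : ℝ) (f : ℝ → ℝ) : ℝ :=
  (∫ x in (-1:ℝ)..1, (f x) ^ 2 * (1 - x ^ 2) ^ (lam - 1/2)) ^ ((1:ℝ)/2)

/-- The best Markov constant `c_n(lam)` in `‖p'‖ ≤ c_n(lam) ‖p‖` for polynomials of degree ≤ n. -/
noncomputable def markovConst (lam : ℝ) (n : ℕ) : ℝ :=
  sSup { r : ℝ | ∃ p : Polynomial ℝ, p ≠ 0 ∧ p.natDegree ≤ n ∧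
    r = gegNorm lam (fun x => (Polynomial.derivative p).eval x) /
        gegNorm lam (fun x => p.eval x) }

/-! ### Power asymptotics of sequences -/

/-- `PowAsymp x p L` says that `x i / i ^ p → L`: for `L ≠ 0` it is the asymptotic equivalence
`x i ∼ L * i ^ p`, while for `L = 0` it only says `x i = o(i ^ p)`. -/
def PowAsymp (x : ℕ → ℝ) (p L : ℝ) : Prop :=
  Tendsto (fun i : ℕ => x i / (i : ℝ) ^ p) atTop (nhds L)

namespace PowAsymp

variable {x y : ℕ → ℝ} {p q L M : ℝ}

theorem of_eq (h : PowAsymp x p L) (hp : p = q) (hL : L = M) : PowAsymp x q M :=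
  hp ▸ hL ▸ h

theorem congr (h : PowAsymp x p L) (hxy : ∀ i, x i = y i) : PowAsymp y p L :=
  funext hxy ▸ h

theorem rpow (p : ℝ) : PowAsymp (fun i => (i : ℝ) ^ p) p 1 := by
  refine Tendsto.congr' ?_ tendsto_const_nhds
  filter_upwards [eventually_gt_atTop 0] with i hi
  exact (div_self (by positivity)).symm

theorem add (hx : PowAsymp x p L) (hy : PowAsymp y p M) :
    PowAsymp (fun i => x i + y i) p (L + M) :=
  (Tendsto.add hx hy).congr fun _ => (add_div _ _ _).symm

theorem const_mul (c : ℝ) (hx : PowAsymp x p L) : PowAsymp (fun i => c * x i) p (c * L) :=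
  (Tendsto.const_mul c hx).congr fun _ => (mul_div_assoc _ _ _).symm

theorem mul (hx : PowAsymp x p L) (hy : PowAsymp y q M) :
    PowAsymp (fun i => x i * y i) (p + q) (L * M) := by
  refine (Tendsto.mul hx hy).congr' ?_
  filter_upwards [eventually_gt_atTop 0] with i hi
  rw [Real.rpow_add (by positivity), div_mul_div_comm]

theorem div (hx : PowAsymp x p L) (hy : PowAsymp y q M) (hM : M ≠ 0) :
    PowAsymp (fun i => x i / y i) (p - q) (L / M) := by
  refine (Tendsto.div hx hy hM).congr' ?_
  filter_upwards [eventually_gt_atTop 0] with i hi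
  rw [Real.rpow_sub (by positivity), Pi.div_apply, div_div_div_comm]

theorem sq (hx : PowAsymp x p L) : PowAsymp (fun i => x i ^ 2) (2 * p) (L ^ 2) :=
  ((hx.mul hx).congr fun i => (_root_.sq (x i)).symm).of_eq (two_mul p).symm (_root_.sq L).symm

theorem sqrt (hx : PowAsymp x (2 * p) L) : PowAsymp (fun i => √(x i)) p √L := by
  refine (Tendsto.sqrt hx).congr fun i => ?_
  rw [mul_comm, Real.rpow_mul i.cast_nonneg, Real.rpow_two, Real.sqrt_div' _ (sq_nonneg _),
    Real.sqrt_sq (by positivity)]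

theorem comp (hx : PowAsymp x p L) {φ : ℕ → ℕ} {c : ℝ} (hc : 0 < c)
    (hφ : PowAsymp (fun i => φ i) 1 c) : PowAsymp (fun i => x (φ i)) p (L * c ^ p) := by
  simp only [PowAsymp, Real.rpow_one] at hφ
  have hφ_top : Tendsto φ atTop atTop := by
    refine (tendsto_natCast_atTop_iff (R := ℝ)).1 ?_
    refine (hφ.pos_mul_atTop hc tendsto_natCast_atTop_atTop).congr' ?_
    filter_upwards [eventually_gt_atTop 0] with i hi
    exact div_mul_cancel₀ _ (by positivity)
  refine ((Tendsto.comp hx hφ_top).mul (hφ.rpow_const (p := p) (Or.inl hc.ne'))).congr' ?_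
  filter_upwards [eventually_gt_atTop 0, hφ_top.eventually_gt_atTop 0] with i hi hφi
  have : (0 : ℝ) < i := by exact_mod_cast hi
  have : (0 : ℝ) < φ i := by exact_mod_cast hφi
  rw [Function.comp_apply, Real.div_rpow (by positivity) (by positivity)]
  field_simp

theorem mul_natCast_add (a t : ℝ) : PowAsymp (fun i => a * i + t) 1 a := by
  have h : Tendsto (fun i : ℕ => a + t / i) atTop (nhds a) := by
    simpa using (tendsto_const_div_atTop_nhds_zero_nat t).const_add a
  refine h.congr' ?_
  filter_upwards [eventually_gt_atTop 0] with i hi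
  rw [Real.rpow_one, add_div, mul_div_cancel_right₀ _ (by positivity)]

theorem comp_mul_add (hx : PowAsymp x p L) {a : ℕ} (ha : 0 < a) (b : ℕ) :
    PowAsymp (fun i => x (a * i + b)) p (L * (a : ℝ) ^ p) :=
  hx.comp (Nat.cast_pos.2 ha) (by simpa using mul_natCast_add a b)

theorem comp_add (hx : PowAsymp x p L) (b : ℕ) : PowAsymp (fun i => x (i + b)) p L := by
  simpa using hx.comp_mul_add one_pos b

theorem of_comp_add {b : ℕ} (hx : PowAsymp (fun i => x (i + b)) p L) : PowAsymp x p L := by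
  refine (tendsto_add_atTop_iff_nat b).1 ?_
  simpa [PowAsymp] using hx.div ((rpow p).comp_add b) one_ne_zero

theorem natCast_half : PowAsymp (fun n => ((n / 2 : ℕ) : ℝ)) 1 (1 / 2) := by
  refine ((tendsto_nat_floor_mul_div_atTop (R := ℝ) (by norm_num : (0 : ℝ) ≤ 1 / 2)).comp
    tendsto_natCast_atTop_atTop).congr fun n => ?_
  rw [Function.comp_apply, Real.rpow_one, one_div_mul_eq_div, Nat.floor_div_ofNat,
    Nat.floor_natCast]

theorem eventually_le_mul_rpow (hx : PowAsymp x p L) {C : ℝ} (hC : L < C) :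
    ∀ᶠ m : ℕ in atTop, x m ≤ C * (m : ℝ) ^ p := by
  filter_upwards [Tendsto.eventually_le_const hC hx, eventually_gt_atTop 0] with m hm hm0
  exact (div_le_iff₀ (by positivity)).1 hm

theorem eventually_abs_sub_le (hx : PowAsymp x p L) {ε : ℝ} (hε : 0 < ε) :
    ∀ᶠ k : ℕ in atTop, |x k - L * (k : ℝ) ^ p| ≤ ε * (k : ℝ) ^ p := by
  filter_upwards [(Metric.tendsto_nhds.1 hx) ε hε, eventually_gt_atTop 0] with k hk hk0
  have hkp : 0 < (k : ℝ) ^ p := by positivity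
  calc |x k - L * (k : ℝ) ^ p| = |x k / (k : ℝ) ^ p - L| * (k : ℝ) ^ p := by
        rw [← abs_of_pos hkp, ← abs_mul, sub_mul, abs_of_pos hkp, div_mul_cancel₀ _ hkp.ne']
    _ ≤ ε * (k : ℝ) ^ p := by
        gcongr
        exact hk.le

theorem eventually_forall_abs_sub_le (hx : PowAsymp x p L) (hp : 0 < p) {ε : ℝ} (hε : 0 < ε) :
    ∀ᶠ m : ℕ in atTop, ∀ k ≤ m, |x k - L * (k : ℝ) ^ p| ≤ ε * (m : ℝ) ^ p := by
  obtain ⟨N, hN⟩ := eventually_atTop.1 (hx.eventually_abs_sub_le hε)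
  have htop : Tendsto (fun m : ℕ => ε * (m : ℝ) ^ p) atTop atTop :=
    ((tendsto_rpow_atTop hp).comp tendsto_natCast_atTop_atTop).const_mul_atTop hε
  have hsmall : ∀ᶠ m : ℕ in atTop, ∀ k ∈ Finset.range N,
      |x k - L * (k : ℝ) ^ p| ≤ ε * (m : ℝ) ^ p :=
    (Finset.range N).eventually_all.2 fun k _ => htop.eventually_ge_atTop _
  filter_upwards [hsmall] with m hm k hkm
  rcases lt_or_ge k N with hk | hk
  · exact hm k (Finset.mem_range.2 hk)
  · exact (hN k hk).trans (by gcongr)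

theorem rpow_succ_sub (p : ℝ) :
    PowAsymp (fun i => ((i : ℝ) + 1) ^ p - (i : ℝ) ^ p) (p - 1) p := by
  have hd : HasDerivAt (fun t : ℝ => (1 + t) ^ p) p 0 := by
    simpa using ((hasDerivAt_id (0 : ℝ)).const_add 1).rpow_const (p := p) (Or.inl (by simp))
  have hinv : Tendsto (fun i : ℕ => (i : ℝ)⁻¹) atTop (nhdsWithin 0 {0}ᶜ) :=
    tendsto_nhdsWithin_iff.2 ⟨tendsto_inv_atTop_nhds_zero_nat, by
      filter_upwards [eventually_gt_atTop 0] with i hi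
      simpa using hi.ne'⟩
  refine (hd.tendsto_slope_zero.comp hinv).congr' ?_
  filter_upwards [eventually_gt_atTop 0] with i hi
  have hi' : (0 : ℝ) < i := by exact_mod_cast hi
  have hip := (Real.rpow_pos_of_pos hi' p).ne'
  have hone : 1 + (i : ℝ)⁻¹ = ((i : ℝ) + 1) / i := by field_simp
  simp only [Function.comp, zero_add, add_zero, Real.one_rpow, inv_inv, smul_eq_mul]
  rw [hone, Real.div_rpow (by positivity) hi'.le, Real.rpow_sub hi', Real.rpow_one]
  field_simp

-- Comparing `x` with the increments of `i ^ (p + 1)` makes the comparison sum telescope.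
theorem sum_range (hx : PowAsymp x p L) (hp : -1 < p) :
    PowAsymp (fun k => ∑ i ∈ Finset.range k, x i) (p + 1) (L / (p + 1)) := by
  have hp1 : 0 < p + 1 := by linarith
  set g : ℕ → ℝ := fun i => ((i : ℝ) + 1) ^ (p + 1) - (i : ℝ) ^ (p + 1) with hg
  have hg_pos i : 0 < g i := sub_pos.2 (Real.rpow_lt_rpow i.cast_nonneg (by linarith) hp1)
  have hg_sum k : ∑ i ∈ Finset.range k, g i = (k : ℝ) ^ (p + 1) := by
    simpa [hg, Real.zero_rpow hp1.ne'] using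
      Finset.sum_range_sub (fun i : ℕ => (i : ℝ) ^ (p + 1)) k
  have hratio : Tendsto (fun i => x i / g i) atTop (nhds (L / (p + 1))) := by
    simpa [PowAsymp] using hx.div (rpow_succ_sub (p + 1)) hp1.ne'
  have ho : (fun i => x i - L / (p + 1) * g i) =o[atTop] g := by
    rw [Asymptotics.isLittleO_iff_tendsto fun i hi => absurd hi (hg_pos i).ne']
    rw [← sub_self (L / (p + 1))]
    refine (hratio.sub_const _).congr fun i => ?_
    rw [sub_div, mul_div_cancel_right₀ _ (hg_pos i).ne']
  have htop : Tendsto (fun k => ∑ i ∈ Finset.range k, g i) atTop atTop := by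
    simp only [hg_sum]
    exact (tendsto_rpow_atTop hp1).comp tendsto_natCast_atTop_atTop
  have hsum := (ho.sum_range (fun i => (hg_pos i).le) htop).tendsto_div_nhds_zero
  rw [PowAsymp, ← zero_add (L / (p + 1))]
  refine (hsum.add_const _).congr' ?_
  filter_upwards [eventually_gt_atTop 0] with k hk
  have hkp : (k : ℝ) ^ (p + 1) ≠ 0 := by positivity
  rw [Finset.sum_sub_distrib, ← Finset.mul_sum, hg_sum, sub_div, mul_div_cancel_right₀ _ hkp,
    sub_add_cancel]

theorem sum_range_succ (hx : PowAsymp x p L) (hp : -1 < p) :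
    PowAsymp (fun k => ∑ i ∈ Finset.range (k + 1), x i) (p + 1) (L / (p + 1)) :=
  (hx.sum_range hp).comp_add 1

end PowAsymp

/-! ### Discrete weighted Hardy inequalities -/

/-- `C` is an admissible constant on `m` terms in the discrete Hardy inequality with weights `b` and
`H`. The Hardy operator is the tail sum `x ↦ (∑_{i ≤ k < m} x k)_i`. -/
def IsHardyConst (b H : ℕ → ℝ) (m : ℕ) (C : ℝ) : Prop :=
  ∀ x : ℕ → ℝ, ∑ i ∈ Finset.range m, b i * (∑ k ∈ Finset.Ico i m, x k) ^ 2 ≤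
    C * ∑ k ∈ Finset.range m, H k * x k ^ 2

section Hardy

variable {b H f : ℕ → ℝ} {m : ℕ}

theorem IsHardyConst.mono {C C' : ℝ} (h : IsHardyConst b H m C) (hH : ∀ i, 0 < H i)
    (hC : C ≤ C') : IsHardyConst b H m C' := fun x =>
  (h x).trans <| mul_le_mul_of_nonneg_right hC <|
    Finset.sum_nonneg fun k _ => mul_nonneg (hH k).le (sq_nonneg _)

theorem sum_mul_sum_Ico_sq (b x : ℕ → ℝ) (m : ℕ) :
    ∑ i ∈ Finset.range m, b i * (∑ k ∈ Finset.Ico i m, x k) ^ 2 =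
      ∑ z ∈ Finset.range m ×ˢ Finset.range m,
        x z.1 * x z.2 * ∑ i ∈ Finset.range (min z.1 z.2 + 1), b i := by
  have hsq i : b i * (∑ k ∈ Finset.Ico i m, x k) ^ 2 =
      ∑ z ∈ Finset.Ico i m ×ˢ Finset.Ico i m, x z.1 * x z.2 * b i := by
    rw [← Finset.sum_mul, sq, Finset.sum_mul_sum, Finset.sum_product, mul_comm]
  simp only [hsq, Finset.mul_sum]
  refine Finset.sum_comm' fun i z => ?_
  simp only [Finset.mem_product, Finset.mem_range, Finset.mem_Ico]
  omega

theorem sum_product_range_le_two_mul {K : ℕ → ℕ → ℝ} (hK : ∀ k l, 0 ≤ K k l)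
    (hsymm : ∀ k l, K k l = K l k) (m : ℕ) :
    ∑ z ∈ Finset.range m ×ˢ Finset.range m, K z.1 z.2 ≤
      2 * ∑ k ∈ Finset.range m, ∑ l ∈ Finset.range (k + 1), K k l := by
  set t : ℕ → ℕ → ℝ := fun k l => if l ∈ Finset.range (k + 1) then K k l else 0 with ht
  have hle k l : K k l ≤ t k l + t l k := by
    have := hK k l
    simp only [ht, Finset.mem_range, hsymm l k]
    split_ifs <;> linarith
  have ht_sum : ∀ k ∈ Finset.range m,
      ∑ l ∈ Finset.range m, t k l = ∑ l ∈ Finset.range (k + 1), K k l := fun k hk => by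
    rw [Finset.sum_ite_mem, Finset.inter_eq_right.2]
    exact Finset.range_mono (Finset.mem_range.1 hk)
  calc ∑ z ∈ Finset.range m ×ˢ Finset.range m, K z.1 z.2
      ≤ ∑ z ∈ Finset.range m ×ˢ Finset.range m, (t z.1 z.2 + t z.2 z.1) :=
        Finset.sum_le_sum fun z _ => hle z.1 z.2
    _ = 2 * ∑ k ∈ Finset.range m, ∑ l ∈ Finset.range m, t k l := by
        rw [Finset.sum_add_distrib, Finset.sum_product, Finset.sum_product_right, two_mul]
    _ = _ := by rw [Finset.sum_congr rfl ht_sum]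

theorem sq_sum_product_mul_le {ι : Type*} {w : ι → ℝ} (hw : ∀ i, 0 < w i) (x : ι → ℝ)
    (K : ι → ι → ℝ) (s : Finset ι) :
    (∑ z ∈ s ×ˢ s, x z.1 * x z.2 * K z.1 z.2) ^ 2 ≤
      (∑ z ∈ s ×ˢ s, K z.1 z.2 ^ 2 / (w z.1 * w z.2)) * (∑ i ∈ s, w i * x i ^ 2) ^ 2 := by
  rw [sq (∑ i ∈ s, _), Finset.sum_mul_sum, ← Finset.sum_product']
  refine Finset.sum_sq_le_sum_mul_sum_of_sq_le_mul _ (fun z _ => ?_) (fun z _ => ?_)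
    fun z _ => le_of_eq ?_
  all_goals have := hw z.1; have := hw z.2
  · positivity
  · positivity
  · field_simp

/-- An upper bound for the squared Hilbert–Schmidt norm of the operator `A` for which the left-hand
side of the Hardy inequality is `⟪A x, x⟫` in the inner product weighted by `H`; the diagonal is
counted twice. -/
noncomputable def hardyFrobeniusSq (b H : ℕ → ℝ) (m : ℕ) : ℝ :=
  2 * ∑ k ∈ Finset.range m,
    (∑ l ∈ Finset.range (k + 1), (∑ i ∈ Finset.range (l + 1), b i) ^ 2 / H l) / H k

theorem isHardyConst_sqrt_hardyFrobeniusSq (hH : ∀ i, 0 < H i) (m : ℕ) :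
    IsHardyConst b H m √(hardyFrobeniusSq b H m) := fun x => by
  set S : ℕ → ℝ := fun l => ∑ i ∈ Finset.range (l + 1), b i
  have hnorm : 0 ≤ ∑ k ∈ Finset.range m, H k * x k ^ 2 :=
    Finset.sum_nonneg fun k _ => mul_nonneg (hH k).le (sq_nonneg _)
  have hkernel : ∑ z ∈ Finset.range m ×ˢ Finset.range m, S (min z.1 z.2) ^ 2 / (H z.1 * H z.2) ≤
      hardyFrobeniusSq b H m := by
    refine (sum_product_range_le_two_mul (K := fun k l => S (min k l) ^ 2 / (H k * H l))
      (fun k l => div_nonneg (sq_nonneg _) (mul_pos (hH k) (hH l)).le)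
      (fun k l => by rw [min_comm, mul_comm]) m).trans_eq ?_
    refine congrArg (2 * ·) (Finset.sum_congr rfl fun k _ => ?_)
    rw [Finset.sum_div]
    refine Finset.sum_congr rfl fun l hl => ?_
    rw [min_eq_right (Finset.mem_range_succ_iff.1 hl), div_div, mul_comm (H l)]
  have hsq : (∑ i ∈ Finset.range m, b i * (∑ k ∈ Finset.Ico i m, x k) ^ 2) ^ 2 ≤
      hardyFrobeniusSq b H m * (∑ k ∈ Finset.range m, H k * x k ^ 2) ^ 2 := by
    rw [sum_mul_sum_Ico_sq]
    refine (sq_sum_product_mul_le hH x (fun k l => S (min k l)) _).trans ?_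
    gcongr
  refine (Real.le_sqrt_of_sq_le hsq).trans_eq ?_
  rw [Real.sqrt_mul' _ (sq_nonneg _), Real.sqrt_sq hnorm]

theorem isHardyConst_of_schur_test (hb : ∀ i, 0 ≤ b i) (hf : ∀ i, 0 < f i) {M : ℝ}
    (h : ∀ k < m, ∑ i ∈ Finset.range (k + 1), b i * ∑ l ∈ Finset.Ico i m, f l ≤ M * (f k * H k)) :
    IsHardyConst b H m M := fun x => by
  have hcauchy i : (∑ k ∈ Finset.Ico i m, x k) ^ 2 ≤
      (∑ k ∈ Finset.Ico i m, x k ^ 2 / f k) * ∑ l ∈ Finset.Ico i m, f l :=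
    Finset.sum_sq_le_sum_mul_sum_of_sq_le_mul _ (fun k _ => div_nonneg (sq_nonneg _) (hf k).le)
      (fun k _ => (hf k).le) fun k _ => (div_mul_cancel₀ _ (hf k).ne').ge
  calc ∑ i ∈ Finset.range m, b i * (∑ k ∈ Finset.Ico i m, x k) ^ 2
      ≤ ∑ i ∈ Finset.range m,
          b i * ((∑ k ∈ Finset.Ico i m, x k ^ 2 / f k) * ∑ l ∈ Finset.Ico i m, f l) := by
        gcongr with i
        · exact hb i
        · exact hcauchy i
    _ = ∑ i ∈ Finset.range m, ∑ k ∈ Finset.Ico i m,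
          x k ^ 2 / f k * (b i * ∑ l ∈ Finset.Ico i m, f l) := by
        refine Finset.sum_congr rfl fun i _ => ?_
        rw [mul_left_comm, Finset.sum_mul]
    _ = ∑ k ∈ Finset.range m,
          x k ^ 2 / f k * ∑ i ∈ Finset.range (k + 1), b i * ∑ l ∈ Finset.Ico i m, f l := by
        simp only [Finset.mul_sum (Finset.range _)]
        refine Finset.sum_comm' fun i k => ?_
        simp only [Finset.mem_range, Finset.mem_Ico]
        omega
    _ ≤ ∑ k ∈ Finset.range m, x k ^ 2 / f k * (M * (f k * H k)) := by
        gcongr with k hk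
        · exact div_nonneg (sq_nonneg _) (hf k).le
        · exact h k (Finset.mem_range.1 hk)
    _ = M * ∑ k ∈ Finset.range m, H k * x k ^ 2 := by
        rw [Finset.mul_sum]
        refine Finset.sum_congr rfl fun k _ => ?_
        have := (hf k).ne'
        field_simp

end Hardy

/-- The discrete Hardy inequality with weights `b` and `H` holds on `m` terms with a constant
asymptotically at most `K * m ^ d`. -/
def HardyBound (b H : ℕ → ℝ) (d K : ℝ) : Prop :=
  ∀ C > K, ∀ᶠ m : ℕ in atTop, IsHardyConst b H m (C * (m : ℝ) ^ d)

theorem HardyBound.of_powAsymp {b H C : ℕ → ℝ} {d K : ℝ} (hH : ∀ i, 0 < H i)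
    (hC : PowAsymp C d K) (h : ∀ᶠ m in atTop, IsHardyConst b H m (C m)) :
    HardyBound b H d K := fun C' hC' => by
  filter_upwards [h, hC.eventually_le_mul_rpow hC'] with m hm hCm
  exact hm.mono hH hCm

/-- Weights with `b i ∼ ρ η i ^ (s - 1)` and `H k ∼ η k ^ (s + 1 - d)`. The exponents are chosen so
that the best constant in the Hardy inequality on `m` terms has order `m ^ d`; it does not depend on
the common scale `η`. -/
structure PowerWeights (b H : ℕ → ℝ) (s d ρ η : ℝ) : Prop where
  left_nonneg : ∀ i, 0 ≤ b i
  right_pos : ∀ i, 0 < H i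
  scale_pos : 0 < η
  left_asymp : PowAsymp b (s - 1) (ρ * η)
  right_asymp : PowAsymp H (s + 1 - d) η

namespace PowerWeights

variable {b H : ℕ → ℝ} {s d ρ η q : ℝ}

theorem powAsymp_hardyFrobeniusSq (hw : PowerWeights b H s d ρ η) (hs : 0 < s) (hd : 0 < d) :
    PowAsymp (hardyFrobeniusSq b H) (2 * d) (ρ ^ 2 / (s ^ 2 * d * (s + d))) := by
  have hη := hw.scale_pos
  have hS : PowAsymp (fun l => ∑ i ∈ Finset.range (l + 1), b i) s (ρ * η / s) :=
    (hw.left_asymp.sum_range_succ (by linarith)).of_eq (by ring) (by ring)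
  have hT : PowAsymp (fun k => ∑ l ∈ Finset.range (k + 1),
      (∑ i ∈ Finset.range (l + 1), b i) ^ 2 / H l) (s + d) (ρ ^ 2 * η / (s ^ 2 * (s + d))) :=
    ((hS.sq.div hw.right_asymp hη.ne').sum_range_succ (by linarith)).of_eq (by ring) (by
      rw [show 2 * s - (s + 1 - d) + 1 = s + d by ring]
      field_simp)
  refine (((hT.div hw.right_asymp hη.ne').sum_range (by linarith)).const_mul 2).of_eq (by ring) ?_
  rw [show s + d - (s + 1 - d) + 1 = 2 * d by ring]
  field_simp

theorem hardyBound_frobenius (hw : PowerWeights b H s d ρ η) (hs : 0 < s) (hd : 0 < d)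
    (hρ : 0 ≤ ρ) : HardyBound b H d (ρ / (s * √(d * (s + d)))) := by
  refine .of_powAsymp hw.right_pos ((hw.powAsymp_hardyFrobeniusSq hs hd).sqrt.of_eq rfl ?_)
    (.of_forall (isHardyConst_sqrt_hardyFrobeniusSq hw.right_pos))
  rw [mul_assoc, Real.sqrt_div' _ (by positivity), Real.sqrt_sq hρ, Real.sqrt_mul (sq_nonneg s),
    Real.sqrt_sq hs.le]

end PowerWeights

theorem rpow_le_young {d q x y : ℝ} (hd : 0 ≤ d) (hq : 0 < q) (hx : 0 ≤ x) (hy : 0 < y) :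
    x ^ d ≤ d / (d + q) * (y ^ (-q) * x ^ (d + q)) + q / (d + q) * y ^ d := by
  have hdq : d + q ≠ 0 := by positivity
  have h := Real.geom_mean_le_arith_mean2_weighted (w₁ := d / (d + q)) (w₂ := q / (d + q))
    (p₁ := y ^ (-q) * x ^ (d + q)) (p₂ := y ^ d) (by positivity) (by positivity) (by positivity)
    (by positivity) (by field_simp)
  refine le_of_eq_of_le ?_ h
  rw [Real.mul_rpow (by positivity) (by positivity), ← Real.rpow_mul hx, ← Real.rpow_mul hy.le,
    ← Real.rpow_mul hy.le, mul_div_cancel₀ _ hdq, mul_right_comm, ← Real.rpow_add hy,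
    show -q * (d / (d + q)) + d * (q / (d + q)) = 0 by ring, Real.rpow_zero, one_mul]

theorem eventually_forall_sub_mul_le {y z : ℕ → ℝ} {d q A B C : ℝ} (hd : 0 < d) (hq : 0 < q)
    (hA : 0 ≤ A) (hy : PowAsymp y d A) (hz : PowAsymp z (d + q) B) (hAB : d * A ≤ (d + q) * B)
    (hC : q * A / (d + q) < C) :
    ∀ᶠ m : ℕ in atTop, ∀ k ≤ m, y k - (m : ℝ) ^ (-q) * z k ≤ C * (m : ℝ) ^ d := by
  have hdq : 0 < d + q := by positivity
  set ε := (C - q * A / (d + q)) / 2 with hε_def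
  have hε : 0 < ε := by linarith
  filter_upwards [hy.eventually_forall_abs_sub_le hd hε, hz.eventually_forall_abs_sub_le hdq hε,
    eventually_gt_atTop 0] with m hym hzm hm k hk
  have hm' : (0 : ℝ) < m := by exact_mod_cast hm
  have hmq : (m : ℝ) ^ (-q) * (m : ℝ) ^ (d + q) = (m : ℝ) ^ d := by
    rw [← Real.rpow_add hm', neg_add_cancel_comm_assoc]
  have hyk : y k ≤ A * (k : ℝ) ^ d + ε * (m : ℝ) ^ d := by
    linarith [(abs_le.1 (hym k hk)).2]
  have hzk : B * ((m : ℝ) ^ (-q) * (k : ℝ) ^ (d + q)) - ε * (m : ℝ) ^ d ≤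
      (m : ℝ) ^ (-q) * z k := by
    rw [← hmq]
    have := mul_le_mul_of_nonneg_left (abs_le.1 (hzm k hk)).1 (Real.rpow_nonneg hm'.le (-q))
    linarith
  have hyoung := mul_le_mul_of_nonneg_left (rpow_le_young hd.le hq k.cast_nonneg hm') hA
  have hAB' : A * (d / (d + q)) * ((m : ℝ) ^ (-q) * (k : ℝ) ^ (d + q)) ≤
      B * ((m : ℝ) ^ (-q) * (k : ℝ) ^ (d + q)) := by
    gcongr
    rw [← mul_div_assoc, div_le_iff₀ hdq]
    linarith
  have hC_eq : C * (m : ℝ) ^ d = A * (q / (d + q)) * (m : ℝ) ^ d + 2 * ε * (m : ℝ) ^ d := by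
    rw [hε_def]
    ring
  linarith

/-- The vector of the Schur test: the increments of `k ↦ -(k + 1) ^ (-q)`. -/
noncomputable def schurTest (q : ℝ) (k : ℕ) : ℝ :=
  ((k : ℝ) + 1) ^ (-q) - ((k : ℝ) + 1 + 1) ^ (-q)

theorem schurTest_pos {q : ℝ} (hq : 0 < q) (k : ℕ) : 0 < schurTest q k :=
  sub_pos.2 (Real.rpow_lt_rpow_of_neg (by positivity) (by linarith) (by linarith))

theorem sum_Ico_schurTest (q : ℝ) {i m : ℕ} (him : i ≤ m) :
    ∑ k ∈ Finset.Ico i m, schurTest q k = ((i : ℝ) + 1) ^ (-q) - ((m : ℝ) + 1) ^ (-q) := by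
  have h := Finset.sum_Ico_sub (fun k : ℕ => -((k : ℝ) + 1) ^ (-q)) him
  simpa [schurTest, neg_add_eq_sub] using h

theorem powAsymp_schurTest (q : ℝ) : PowAsymp (schurTest q) (-q - 1) q :=
  ((((PowAsymp.rpow_succ_sub (-q)).comp_add 1).const_mul (-1)).congr fun k => by
    simp [schurTest]).of_eq rfl (by ring)

namespace PowerWeights

variable {b H : ℕ → ℝ} {s d ρ η q : ℝ}

theorem eventually_schur_le (hw : PowerWeights b H s d ρ η) (hd : 0 < d) (hρ : 0 ≤ ρ) (hq : 0 < q)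
    (hqs : q ≤ s - d) {C : ℝ} (hC : ρ / ((s - q) * (d + q)) < C) :
    ∀ᶠ m : ℕ in atTop, ∀ k ≤ m,
      ∑ i ∈ Finset.range (k + 1), b i * (((i : ℝ) + 1) ^ (-q) - (m : ℝ) ^ (-q)) ≤
        C * (m : ℝ) ^ d * (schurTest q k * H k) := by
  have hη := hw.scale_pos
  have hs : 0 < s := by linarith
  have hsq : 0 < s - q := by linarith
  have hdiv := (powAsymp_schurTest q).mul hw.right_asymp
  have hy : PowAsymp (fun k => (∑ i ∈ Finset.range (k + 1), b i * ((i : ℝ) + 1) ^ (-q)) /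
      (schurTest q k * H k)) d (ρ / (q * (s - q))) := by
    have hg : PowAsymp (fun i : ℕ => ((i : ℝ) + 1) ^ (-q)) (-q) 1 := by
      simpa using (PowAsymp.rpow (-q)).comp_add 1
    refine (((hw.left_asymp.mul hg).sum_range_succ (by linarith)).div hdiv
      (by positivity)).of_eq (by ring) ?_
    rw [show s - 1 + -q + 1 = s - q by ring]
    field_simp
  have hz : PowAsymp (fun k => (∑ i ∈ Finset.range (k + 1), b i) / (schurTest q k * H k))
      (d + q) (ρ / (q * s)) := by
    refine ((hw.left_asymp.sum_range_succ (by linarith)).div hdiv (by positivity)).of_eq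
      (by ring) ?_
    rw [sub_add_cancel]
    field_simp
  have hAB : d * (ρ / (q * (s - q))) ≤ (d + q) * (ρ / (q * s)) := by
    rw [mul_div_assoc', mul_div_assoc', div_le_div_iff₀ (by positivity) (by positivity)]
    have : 0 ≤ ρ * q * (q * (s - d - q)) := by
      have : 0 ≤ s - d - q := by linarith
      positivity
    linarith
  have hC' : q * (ρ / (q * (s - q))) / (d + q) < C := by
    refine lt_of_eq_of_lt ?_ hC
    field_simp
  filter_upwards [eventually_forall_sub_mul_le hd hq (by positivity) hy hz hAB hC'] with m hm k hk
  have hpos : 0 < schurTest q k * H k := mul_pos (schurTest_pos hq k) (hw.right_pos k)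
  rw [← div_le_iff₀ hpos]
  refine le_of_eq_of_le ?_ (hm k hk)
  simp only [mul_sub, Finset.sum_sub_distrib, ← Finset.sum_mul]
  ring

theorem hardyBound_schur (hw : PowerWeights b H s d ρ η) (hd : 0 < d) (hρ : 0 ≤ ρ) (hq : 0 < q)
    (hqs : q ≤ s - d) : HardyBound b H d (ρ / ((s - q) * (d + q))) := fun C hC => by
  obtain ⟨C', hC', hC'C⟩ := exists_between hC
  have hsucc : PowAsymp (fun m : ℕ => C' * ((m + 1 : ℕ) : ℝ) ^ d) d C' :=
    (((PowAsymp.rpow d).comp_add 1).const_mul C').of_eq rfl (mul_one C')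
  have hschur := (tendsto_add_atTop_nat 1).eventually (hw.eventually_schur_le hd hρ hq hqs hC')
  filter_upwards [hschur, hsucc.eventually_le_mul_rpow hC'C] with m hm hm_succ
  refine (isHardyConst_of_schur_test hw.left_nonneg (schurTest_pos hq) fun k hk => ?_).mono
    hw.right_pos hm_succ
  refine le_of_eq_of_le (Finset.sum_congr rfl fun i hi => ?_) (hm k (by omega))
  rw [sum_Ico_schurTest q (by have := Finset.mem_range.1 hi; omega)]
  push_cast
  rfl

end PowerWeights

/-- The quotient of the two sides of the Hardy inequality on `m` terms at the vector
`x k = (k + 1) ^ d - k ^ d`, whose tail sums telescope to `m ^ d - i ^ d`. -/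
noncomputable def hardyPowQuotient (b H : ℕ → ℝ) (d : ℝ) (m : ℕ) : ℝ :=
  (∑ i ∈ Finset.range m, b i * ((m : ℝ) ^ d - (i : ℝ) ^ d) ^ 2) /
    ∑ k ∈ Finset.range m, H k * (((k : ℝ) + 1) ^ d - (k : ℝ) ^ d) ^ 2

theorem IsHardyConst.hardyPowQuotient_le {b H : ℕ → ℝ} {m : ℕ} {C d : ℝ}
    (h : IsHardyConst b H m C) (hH : ∀ i, 0 < H i) (hd : 0 < d) (hm : 0 < m) :
    hardyPowQuotient b H d m ≤ C := by
  have hpos : 0 < ∑ k ∈ Finset.range m, H k * (((k : ℝ) + 1) ^ d - (k : ℝ) ^ d) ^ 2 :=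
    Finset.sum_pos (fun k _ => mul_pos (hH k) (pow_pos (sub_pos.2
      (Real.rpow_lt_rpow k.cast_nonneg (lt_add_one _) hd)) 2)) ⟨0, Finset.mem_range.2 hm⟩
  have htail : ∀ i ∈ Finset.range m,
      ∑ k ∈ Finset.Ico i m, (((k : ℝ) + 1) ^ d - (k : ℝ) ^ d) = (m : ℝ) ^ d - (i : ℝ) ^ d :=
    fun i hi => by
      simpa using Finset.sum_Ico_sub (fun k : ℕ => (k : ℝ) ^ d) (Finset.mem_range.1 hi).le
  rw [hardyPowQuotient, div_le_iff₀ hpos]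
  refine le_of_eq_of_le (Finset.sum_congr rfl fun i hi => ?_) (h _)
  rw [htail i hi]

theorem PowerWeights.powAsymp_hardyPowQuotient {b H : ℕ → ℝ} {s d ρ η : ℝ}
    (hw : PowerWeights b H s d ρ η) (hs : 0 < s) (hd : 0 < d) :
    PowAsymp (hardyPowQuotient b H d) d (2 * ρ / (s * (s + 2 * d))) := by
  have hη := hw.scale_pos
  have hb k (hk : 0 ≤ k) : PowAsymp (fun m => ∑ i ∈ Finset.range m, b i * (i : ℝ) ^ k) (s + k)
      (ρ * η / (s + k)) :=
    ((hw.left_asymp.mul (.rpow k)).sum_range (by linarith)).of_eq (by ring) (by ring_nf)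
  have hnum : PowAsymp (fun m => ∑ i ∈ Finset.range m, b i * ((m : ℝ) ^ d - (i : ℝ) ^ d) ^ 2)
      (s + 2 * d) (ρ * η * (2 * d ^ 2) / (s * (s + d) * (s + 2 * d))) := by
    have h₀ := ((PowAsymp.rpow d).sq.mul (hb 0 le_rfl)).of_eq (q := s + 2 * d) (by ring) rfl
    have h₁ := (((PowAsymp.rpow d).mul (hb d hd.le)).const_mul (-2)).of_eq (q := s + 2 * d)
      (by ring) rfl
    have h₂ := hb (2 * d) (by positivity)
    refine (((h₀.add h₁).add h₂).congr fun m => ?_).of_eq rfl ?_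
    · simp only [Finset.mul_sum, ← Finset.sum_add_distrib]
      refine Finset.sum_congr rfl fun i _ => ?_
      rw [mul_comm 2 d, Real.rpow_mul i.cast_nonneg, Real.rpow_two, Real.rpow_zero]
      ring
    · rw [add_zero]
      field_simp
      ring
  have hden : PowAsymp (fun m => ∑ k ∈ Finset.range m,
      H k * (((k : ℝ) + 1) ^ d - (k : ℝ) ^ d) ^ 2) (s + d) (η * d ^ 2 / (s + d)) :=
    ((hw.right_asymp.mul (PowAsymp.rpow_succ_sub d).sq).sum_range (by linarith)).of_eq (by ring)
      (by ring_nf)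
  refine (hnum.div hden (by positivity)).of_eq (by ring) ?_
  field_simp

/-! ### Gegenbauer polynomials -/

section Weight

theorem gegNorm_nonneg (lam : ℝ) (f : ℝ → ℝ) : 0 ≤ gegNorm lam f := by
  refine Real.rpow_nonneg (intervalIntegral.integral_nonneg (by norm_num) fun x hx => ?_) _
  have : 0 ≤ 1 - x ^ 2 := by nlinarith [hx.1, hx.2]
  positivity

variable {lam : ℝ}

theorem intervalIntegrable_mul_gegWeight (hlam : -(1 / 2 : ℝ) < lam) {f : ℝ → ℝ}
    (hf : Continuous f) :
    IntervalIntegrable (fun x => f x * (1 - x ^ 2) ^ (lam - 1 / 2))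
      MeasureTheory.volume (-1) 1 := by
  have hneg : IntervalIntegrable (fun x : ℝ => (1 - x ^ 2) ^ (lam - 1 / 2))
      MeasureTheory.volume (-1) 0 := by
    have hleft : IntervalIntegrable (fun x : ℝ => (1 + x) ^ (lam - 1 / 2))
        MeasureTheory.volume (-1) 0 := by
      simpa using (intervalIntegral.intervalIntegrable_rpow' (a := 0) (b := 1)
        (r := lam - 1 / 2) (by linarith)).comp_add_left 1
    have hright : ContinuousOn (fun x : ℝ => (1 - x) ^ (lam - 1 / 2)) (Set.uIcc (-1) 0) := by
      refine ContinuousOn.rpow_const (by fun_prop) fun x hx => Or.inl ?_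
      rw [Set.uIcc_of_le (by norm_num)] at hx
      linarith [hx.2]
    refine (hleft.mul_continuousOn hright).congr fun x hx => ?_
    rw [Set.uIoc_of_le (by norm_num)] at hx
    rw [← Real.mul_rpow (by linarith [hx.1]) (by linarith [hx.2])]
    ring_nf
  have hpos : IntervalIntegrable (fun x : ℝ => (1 - x ^ 2) ^ (lam - 1 / 2))
      MeasureTheory.volume 0 1 := by
    simpa using (hneg.comp_mul_left (c := -1)).symm
  exact (hneg.trans hpos).continuousOn_mul hf.continuousOn

variable (hlam : -(1 / 2 : ℝ) < lam)

/-- Integration of polynomials over `[-1, 1]` against the Gegenbauer weight. -/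
noncomputable def gegInt : ℝ[X] →ₗ[ℝ] ℝ where
  toFun p := ∫ x in (-1 : ℝ)..1, p.eval x * (1 - x ^ 2) ^ (lam - 1 / 2)
  map_add' p q := by
    simp only [eval_add, add_mul]
    exact intervalIntegral.integral_add (intervalIntegrable_mul_gegWeight hlam p.continuous)
      (intervalIntegrable_mul_gegWeight hlam q.continuous)
  map_smul' c p := by
    simp only [eval_smul, smul_eq_mul, mul_assoc, intervalIntegral.integral_const_mul,
      RingHom.id_apply]

theorem gegInt_apply (p : ℝ[X]) :
    gegInt hlam p = ∫ x in (-1 : ℝ)..1, p.eval x * (1 - x ^ 2) ^ (lam - 1 / 2) := rfl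

theorem gegInt_C_mul (c : ℝ) (p : ℝ[X]) : gegInt hlam (C c * p) = c * gegInt hlam p := by
  rw [← smul_eq_C_mul, map_smul, smul_eq_mul]

theorem gegInt_one_pos : 0 < gegInt hlam 1 := by
  refine intervalIntegral.intervalIntegral_pos_of_pos_on
    (intervalIntegrable_mul_gegWeight hlam (Polynomial.continuous 1)) (fun x hx => ?_) (by norm_num)
  have : 0 < 1 - x ^ 2 := by nlinarith [hx.1, hx.2]
  simpa using Real.rpow_pos_of_pos this _

theorem gegInt_sq_nonneg (p : ℝ[X]) : 0 ≤ gegInt hlam (p ^ 2) := by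
  refine intervalIntegral.integral_nonneg (by norm_num) fun x hx => ?_
  have : 0 ≤ 1 - x ^ 2 := by nlinarith [hx.1, hx.2]
  rw [eval_pow]
  positivity

theorem gegNorm_eval (p : ℝ[X]) :
    gegNorm lam (fun x => p.eval x) = √(gegInt hlam (p ^ 2)) := by
  simp only [Real.sqrt_eq_rpow, gegNorm, gegInt_apply, eval_pow]

-- The integrand is the derivative of `(1 - x ^ 2) ^ (lam + 1 / 2) * q`, which vanishes at `±1`.
theorem gegInt_one_sub_X_sq_mul_derivative (q : ℝ[X]) :
    gegInt hlam ((1 - X ^ 2) * derivative q - C (2 * lam + 1) * X * q) = 0 := by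
  have hcont : ContinuousOn (fun x : ℝ => q.eval x * (1 - x ^ 2) ^ (lam + 1 / 2))
      (Set.Icc (-1) 1) := by
    refine q.continuous.continuousOn.mul (ContinuousOn.rpow_const (by fun_prop) fun x _ => ?_)
    exact Or.inr (by linarith)
  have hderiv : ∀ x ∈ Set.Ioo (-1 : ℝ) 1,
      HasDerivAt (fun x => q.eval x * (1 - x ^ 2) ^ (lam + 1 / 2))
        (((1 - X ^ 2) * derivative q - C (2 * lam + 1) * X * q).eval x *
          (1 - x ^ 2) ^ (lam - 1 / 2)) x := fun x hx => by
    have hx0 : 0 < 1 - x ^ 2 := by nlinarith [hx.1, hx.2]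
    have hd : HasDerivAt (fun y : ℝ => 1 - y ^ 2) (-(2 * x)) x := by
      simpa using (hasDerivAt_pow 2 x).const_sub 1
    refine ((q.hasDerivAt x).mul (hd.rpow_const (p := lam + 1 / 2) (Or.inl hx0.ne'))).congr_deriv ?_
    rw [show lam + 1 / 2 - 1 = lam - 1 / 2 by ring, show lam + 1 / 2 = lam - 1 / 2 + 1 by ring,
      Real.rpow_add_one hx0.ne']
    simp only [eval_sub, eval_mul, eval_one, eval_pow, eval_X, eval_C]
    ring
  rw [gegInt_apply, intervalIntegral.integral_eq_sub_of_hasDerivAt_of_le (by norm_num) hcont hderiv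
    (intervalIntegrable_mul_gegWeight hlam (Polynomial.continuous _))]
  simp [Real.zero_rpow (by linarith : lam + 2⁻¹ ≠ 0)]

end Weight

section Recurrence

variable (lam : ℝ)

/-- The lower coefficient `n + 2 * lam` in the recurrence of the Gegenbauer polynomials, with the
value `2` instead of `2 * lam` at `n = 0`: this compensates for the renormalisation in `geg`. -/
noncomputable def gegCoeff (n : ℕ) : ℝ := if n = 0 then 2 else n + 2 * lam

/-- Gegenbauer polynomials, renormalised so as not to degenerate at `lam = 0`: in the usual notation
`geg lam 0 = 1`, and `geg lam n = C_n^{(lam)} / lam` for `n ≥ 1`. -/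
noncomputable def geg : ℕ → ℝ[X]
  | 0 => 1
  | 1 => C 2 * X
  | n + 2 => C (1 / ((n : ℝ) + 2)) *
      (C (2 * (n + 1 + lam)) * X * geg (n + 1) - C (gegCoeff lam n) * geg n)

theorem geg_add_two (n : ℕ) :
    C ((n : ℝ) + 2) * geg lam (n + 2) =
      C (2 * (n + 1 + lam)) * X * geg lam (n + 1) - C (gegCoeff lam n) * geg lam n := by
  rw [geg, ← mul_assoc, ← C_mul, mul_one_div_cancel (by positivity), C_1, one_mul]

theorem gegCoeff_succ (n : ℕ) : gegCoeff lam (n + 1) = n + 1 + 2 * lam := by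
  simp [gegCoeff]

theorem gegCoeff_mul_derivative_geg (n : ℕ) :
    C (gegCoeff lam n) * derivative (geg lam n) =
      C ((n : ℝ) + 2 * lam) * derivative (geg lam n) := by
  rcases n with _ | n
  · simp [geg]
  · simp [gegCoeff]

theorem derivative_geg_succ_and_X_mul_derivative_geg_succ (n : ℕ) :
    derivative (geg lam (n + 1)) =
        X * derivative (geg lam n) + C (gegCoeff lam n) * geg lam n ∧
      X * derivative (geg lam (n + 1)) =
        derivative (geg lam n) + C ((n : ℝ) + 1) * geg lam (n + 1) := by
  induction n with
  | zero => simp [geg, gegCoeff, X_mul_C]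
  | succ n ih =>
    obtain ⟨ih_succ, ih_X_mul⟩ := ih
    have hrec := geg_add_two lam n
    have hrec' := congrArg derivative hrec
    simp only [derivative_mul, derivative_sub, derivative_C, derivative_X, zero_mul, zero_add,
      mul_one, gegCoeff_mul_derivative_geg] at hrec'
    have hsucc : derivative (geg lam (n + 2)) =
        X * derivative (geg lam (n + 1)) + C (gegCoeff lam (n + 1)) * geg lam (n + 1) := by
      refine mul_left_cancel₀ (C_ne_zero.2 (by positivity : (n : ℝ) + 2 ≠ 0)) ?_
      rw [hrec', gegCoeff_succ]
      simp only [map_add, map_mul, map_one, map_ofNat] at ih_X_mul ⊢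
      linear_combination (C (n : ℝ) + 2 * C lam) * ih_X_mul
    refine ⟨hsucc, ?_⟩
    rw [hsucc, gegCoeff_succ]
    push_cast
    simp only [map_add, map_mul, map_one, map_ofNat] at ih_X_mul hrec ⊢
    linear_combination X * ih_X_mul - ih_succ - hrec

theorem derivative_geg_succ (n : ℕ) :
    derivative (geg lam (n + 1)) = X * derivative (geg lam n) + C (gegCoeff lam n) * geg lam n :=
  (derivative_geg_succ_and_X_mul_derivative_geg_succ lam n).1

theorem X_mul_derivative_geg_succ (n : ℕ) :
    X * derivative (geg lam (n + 1)) =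
      derivative (geg lam n) + C ((n : ℝ) + 1) * geg lam (n + 1) :=
  (derivative_geg_succ_and_X_mul_derivative_geg_succ lam n).2

theorem derivative_geg_add_two (n : ℕ) :
    derivative (geg lam (n + 2)) =
      derivative (geg lam n) + C (2 * (n + 1 + lam)) * geg lam (n + 1) := by
  rw [derivative_geg_succ, X_mul_derivative_geg_succ, gegCoeff_succ]
  simp only [map_add, map_mul, map_one, map_ofNat]
  ring

theorem geg_ode (n : ℕ) :
    (1 - X ^ 2) * derivative (derivative (geg lam n)) - C (2 * lam + 1) * X * derivative (geg lam n)
      = - C (n * (n + 2 * lam)) * geg lam n := by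
  rcases n with _ | n
  · simp [geg]
  · have hX_mul := X_mul_derivative_geg_succ lam n
    have hcoeff := gegCoeff_mul_derivative_geg lam n
    have hsucc' := congrArg derivative (derivative_geg_succ lam n)
    have hX_mul' := congrArg derivative hX_mul
    simp only [derivative_mul, derivative_add, derivative_C, derivative_X, zero_mul, zero_add,
      one_mul] at hsucc' hX_mul'
    push_cast
    simp only [map_add, map_mul, map_one, map_ofNat] at hX_mul hcoeff hX_mul' ⊢
    linear_combination -X * hX_mul' + hsucc' + hcoeff - (C (n : ℝ) + 1 + 2 * C lam) * hX_mul

/-- The factor of `geg lam n` in the expansion of the derivative of `geg lam k`, for `k > n` of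
opposite parity. It does not depend on `k`. -/
noncomputable def gegDerivCoeff (n : ℕ) : ℝ := if n = 0 then 2 else 2 * (n + lam)

theorem gegDerivCoeff_succ (n : ℕ) : gegDerivCoeff lam (n + 1) = 2 * (n + 1 + lam) := by
  simp [gegDerivCoeff]

theorem derivative_geg_eq_sum {r : ℕ} (hr : r < 2) (k : ℕ) :
    derivative (geg lam (2 * k + r + 1)) =
      ∑ i ∈ Finset.range (k + 1), C (gegDerivCoeff lam (2 * i + r)) * geg lam (2 * i + r) := by
  induction k with
  | zero =>
    interval_cases r
    · simp [geg, gegDerivCoeff]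
    · simpa [gegDerivCoeff, geg] using derivative_geg_add_two lam 0
  | succ k ih =>
    rw [Finset.sum_range_succ, ← ih, show 2 * (k + 1) + r + 1 = 2 * k + r + 1 + 2 by ring,
      derivative_geg_add_two, show 2 * (k + 1) + r = 2 * k + r + 1 + 1 by ring, gegDerivCoeff_succ]

variable {lam}

theorem degree_geg (hlam : -(1 / 2 : ℝ) < lam) (n : ℕ) : (geg lam n).degree = n := by
  induction n using Nat.twoStepInduction with
  | zero => simp [geg]
  | one => simp [geg, degree_C_mul (two_ne_zero' ℝ)]
  | more n ih ih_succ =>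
    have hlead : 2 * ((n : ℝ) + 1 + lam) ≠ 0 := by
      have : 0 < (n : ℝ) + 1 + lam := by linarith [n.cast_nonneg (α := ℝ)]
      positivity
    have hdegree : (C (2 * ((n : ℝ) + 1 + lam)) * X * geg lam (n + 1)).degree =
        ((n + 2 : ℕ) : WithBot ℕ) := by
      rw [mul_assoc, degree_C_mul hlead, degree_mul, degree_X, ih_succ, ← Nat.cast_one,
        ← Nat.cast_add, add_comm, add_assoc]
    have hlt : (C (gegCoeff lam n) * geg lam n).degree < ((n + 2 : ℕ) : WithBot ℕ) := by
      rw [← smul_eq_C_mul]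
      refine (degree_smul_le _ _).trans_lt ?_
      rw [ih, Nat.cast_lt]
      omega
    rw [← hdegree] at hlt ⊢
    rw [← degree_sub_eq_left_of_degree_lt hlt, ← geg_add_two,
      degree_C_mul (by positivity : (n : ℝ) + 2 ≠ 0)]

/-- The Gegenbauer polynomials as a sequence of polynomials of degrees `0, 1, 2, …`. -/
noncomputable def gegSequence (hlam : -(1 / 2 : ℝ) < lam) : Polynomial.Sequence ℝ :=
  ⟨geg lam, degree_geg hlam⟩

theorem exists_eq_sum_geg (hlam : -(1 / 2 : ℝ) < lam) {n : ℕ} {p : ℝ[X]} (hp : p.natDegree < n) :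
    ∃ a : ℕ → ℝ, p = ∑ k ∈ Finset.range n, C (a k) * geg lam k := by
  have hspan : p ∈ Submodule.span ℝ (geg lam '' Set.Iio n) := by
    have hunit i : IsUnit (gegSequence hlam i).leadingCoeff :=
      isUnit_iff_ne_zero.2 (leadingCoeff_ne_zero.2 ((gegSequence hlam).ne_zero i))
    have := (gegSequence hlam).span_degreeLT fun i (_ : i < n) => hunit i
    refine this ▸ mem_degreeLT.2 (degree_le_natDegree.trans_lt ?_)
    exact_mod_cast hp
  rw [← Finset.coe_range, Submodule.mem_span_image_finset_iff_exists_fun'] at hspan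
  obtain ⟨a, ha⟩ := hspan
  exact ⟨a, by simp only [← ha, smul_eq_C_mul]⟩

end Recurrence

section Orthogonality

variable {lam : ℝ} (hlam : -(1 / 2 : ℝ) < lam)

theorem mul_gegInt_geg_mul_geg (n m : ℕ) :
    n * (n + 2 * lam) * gegInt hlam (geg lam n * geg lam m) =
      gegInt hlam ((1 - X ^ 2) * (derivative (geg lam n) * derivative (geg lam m))) := by
  have hparts := gegInt_one_sub_X_sq_mul_derivative hlam (derivative (geg lam n) * geg lam m)
  have hode : (1 - X ^ 2) * derivative (derivative (geg lam n) * geg lam m) -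
      C (2 * lam + 1) * X * (derivative (geg lam n) * geg lam m) =
      (1 - X ^ 2) * (derivative (geg lam n) * derivative (geg lam m)) -
        C (n * (n + 2 * lam)) * (geg lam n * geg lam m) := by
    rw [derivative_mul]
    linear_combination geg lam m * geg_ode lam n
  rw [hode, map_sub, gegInt_C_mul, sub_eq_zero] at hparts
  exact hparts.symm

theorem gegInt_geg_mul_geg_of_ne {n m : ℕ} (hnm : n ≠ m) :
    gegInt hlam (geg lam n * geg lam m) = 0 := by
  have hn := mul_gegInt_geg_mul_geg hlam n m
  have hm := mul_gegInt_geg_mul_geg hlam m n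
  rw [mul_comm (geg lam m), mul_comm (derivative (geg lam m)), ← hn] at hm
  have hmul : ((n : ℝ) - m) * (n + m + 2 * lam) * gegInt hlam (geg lam n * geg lam m) = 0 := by
    linear_combination -hm
  have hsub : (n : ℝ) - m ≠ 0 := sub_ne_zero.2 (by exact_mod_cast hnm)
  have hadd : 0 < (n : ℝ) + m + 2 * lam := by
    have : (1 : ℝ) ≤ n + m := by exact_mod_cast (by omega : 1 ≤ n + m)
    linarith
  exact (mul_eq_zero.1 hmul).resolve_left (mul_ne_zero hsub hadd.ne')

/-- The squared norm of `geg lam n`. -/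
noncomputable def gegSq (n : ℕ) : ℝ := gegInt hlam (geg lam n * geg lam n)

theorem mul_gegInt_X_mul_geg (n : ℕ) :
    2 * (n + 1 + lam) * gegInt hlam (X * geg lam n * geg lam (n + 1)) =
      gegCoeff lam n * gegSq hlam n := by
  have hrec : C (2 * (n + 1 + lam)) * (X * geg lam n * geg lam (n + 1)) =
      C ((n : ℝ) + 2) * (geg lam n * geg lam (n + 2)) +
        C (gegCoeff lam n) * (geg lam n * geg lam n) := by
    linear_combination (-geg lam n) * geg_add_two lam n
  rw [← gegInt_C_mul, hrec, map_add, gegInt_C_mul, gegInt_C_mul,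
    gegInt_geg_mul_geg_of_ne hlam (by omega), mul_zero, zero_add, gegSq]

theorem gegSq_one : (1 + lam) * gegSq hlam 1 = 2 * gegSq hlam 0 := by
  have h := mul_gegInt_X_mul_geg hlam 0
  have hone : C 2 * (X * geg lam 0 * geg lam 1) = geg lam 1 * geg lam 1 := by
    simp only [geg]
    ring
  rw [mul_comm 2, mul_assoc, ← gegInt_C_mul, hone] at h
  simpa [gegCoeff, gegSq] using h

theorem gegSq_add_two (n : ℕ) :
    ((n : ℝ) + 2) * ((n + 2 + lam) * gegSq hlam (n + 2)) =
      (n + 1 + 2 * lam) * ((n + 1 + lam) * gegSq hlam (n + 1)) := by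
  have hlow := mul_gegInt_X_mul_geg hlam (n + 1)
  have hrec : C (2 * (n + 1 + lam)) * (X * geg lam (n + 1) * geg lam (n + 2)) =
      C ((n : ℝ) + 2) * (geg lam (n + 2) * geg lam (n + 2)) +
        C (gegCoeff lam n) * (geg lam n * geg lam (n + 2)) := by
    linear_combination (-geg lam (n + 2)) * geg_add_two lam n
  have hhigh := congrArg (gegInt hlam) hrec
  rw [map_add, gegInt_C_mul, gegInt_C_mul, gegInt_C_mul,
    gegInt_geg_mul_geg_of_ne hlam (by omega : n ≠ n + 2)] at hhigh
  rw [gegCoeff_succ] at hlow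
  push_cast at hlow
  simp only [gegSq] at hlow ⊢
  linear_combination (n + 1 + lam) * hlow - (n + 2 + lam) * hhigh

theorem gegSq_zero_pos : 0 < gegSq hlam 0 := by
  simpa [gegSq, geg] using gegInt_one_pos hlam

theorem gegSq_succ_eq_prod (n : ℕ) :
    ((n : ℝ) + 1 + lam) * gegSq hlam (n + 1) * (n + 1).factorial =
      2 * gegSq hlam 0 * ∏ j ∈ Finset.range n, (2 * lam + 1 + j) := by
  induction n with
  | zero => simpa using gegSq_one hlam
  | succ n ih =>
    have h := gegSq_add_two hlam n
    rw [Finset.prod_range_succ, ← mul_assoc, ← ih, Nat.factorial_succ (n + 1)]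
    push_cast
    linear_combination ((n + 1).factorial : ℝ) * h

theorem gegSq_pos (n : ℕ) : 0 < gegSq hlam n := by
  rcases n with _ | n
  · exact gegSq_zero_pos hlam
  · have hprod : 0 < ∏ j ∈ Finset.range n, (2 * lam + 1 + j) :=
      Finset.prod_pos fun j _ => by linarith [j.cast_nonneg (α := ℝ)]
    have h := mul_pos (mul_pos two_pos (gegSq_zero_pos hlam)) hprod
    rw [← gegSq_succ_eq_prod hlam n] at h
    refine pos_of_mul_pos_right (pos_of_mul_pos_left h (Nat.cast_nonneg _)) ?_
    linarith [n.cast_nonneg (α := ℝ)]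

theorem gegInt_sum_geg_sq {ι : Type*} (s : Finset ι) (c : ι → ℝ) {e : ι → ℕ}
    (he : Set.InjOn e s) :
    gegInt hlam ((∑ i ∈ s, C (c i) * geg lam (e i)) ^ 2) = ∑ i ∈ s, gegSq hlam (e i) * c i ^ 2 := by
  rw [sq, Finset.sum_mul_sum, map_sum]
  refine Finset.sum_congr rfl fun i hi => ?_
  rw [map_sum, Finset.sum_eq_single_of_mem i hi]
  · rw [mul_mul_mul_comm, ← C_mul, gegInt_C_mul, gegSq, sq, mul_comm]
  · intro j hj hji
    rw [mul_mul_mul_comm, ← C_mul, gegInt_C_mul,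
      gegInt_geg_mul_geg_of_ne hlam fun h => hji (he hj hi h.symm), mul_zero]

theorem gegInt_sum_geg_mul_sum_geg_eq_zero {ι κ : Type*} {s : Finset ι} {t : Finset κ} (c : ι → ℝ)
    (d : κ → ℝ) {e : ι → ℕ} {f : κ → ℕ} (hef : ∀ i ∈ s, ∀ j ∈ t, e i ≠ f j) :
    gegInt hlam ((∑ i ∈ s, C (c i) * geg lam (e i)) * ∑ j ∈ t, C (d j) * geg lam (f j)) = 0 := by
  rw [Finset.sum_mul_sum, map_sum]
  refine Finset.sum_eq_zero fun i hi => ?_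
  rw [map_sum]
  refine Finset.sum_eq_zero fun j hj => ?_
  rw [mul_mul_mul_comm, ← C_mul, gegInt_C_mul, gegInt_geg_mul_geg_of_ne hlam (hef i hi j hj),
    mul_zero]

theorem gegInt_sq_pos {p : ℝ[X]} (hp : p ≠ 0) : 0 < gegInt hlam (p ^ 2) := by
  obtain ⟨a, ha⟩ := exists_eq_sum_geg hlam p.natDegree.lt_succ_self
  rw [ha, gegInt_sum_geg_sq hlam _ a (e := fun k => k) Function.injective_id.injOn]
  refine Finset.sum_pos' (fun k _ => mul_nonneg (gegSq_pos hlam k).le (sq_nonneg _)) ?_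
  by_contra! h
  refine hp (ha.trans (Finset.sum_eq_zero fun k hk => ?_))
  have hak : a k = 0 := by
    by_contra hak
    exact (h k hk).not_gt (mul_pos (gegSq_pos hlam k) (by positivity))
  rw [hak, C_0, zero_mul]

theorem gegInt_add_sq_of_mul_eq_zero {p q : ℝ[X]} (h : gegInt hlam (p * q) = 0) :
    gegInt hlam ((p + q) ^ 2) = gegInt hlam (p ^ 2) + gegInt hlam (q ^ 2) := by
  have : (p + q) ^ 2 = p ^ 2 + q ^ 2 + (p * q + p * q) := by ring
  rw [this, map_add, map_add, map_add, h, add_zero, add_zero]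

end Orthogonality

section Parity

variable {lam : ℝ} {r : ℕ}

/-- The polynomial with coefficients `x 0, …, x (m - 1)` along the Gegenbauer polynomials of degrees
`r + 1, r + 3, …, 2 * m + r - 1`. Two of these, for `r = 0` and `r = 1`, make up all polynomials
without constant term in the Gegenbauer expansion. -/
noncomputable def gegParitySum (lam : ℝ) (r m : ℕ) (x : ℕ → ℝ) : ℝ[X] :=
  ∑ k ∈ Finset.range m, C (x k) * geg lam (2 * k + r + 1)

theorem derivative_gegParitySum (hr : r < 2) (m : ℕ) (x : ℕ → ℝ) :
    derivative (gegParitySum lam r m x) =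
      ∑ i ∈ Finset.range m,
        C (gegDerivCoeff lam (2 * i + r) * ∑ k ∈ Finset.Ico i m, x k) * geg lam (2 * i + r) := by
  simp only [gegParitySum, derivative_C_mul, derivative_geg_eq_sum lam hr, C_mul,
    map_sum, Finset.mul_sum, Finset.sum_mul]
  rw [Finset.sum_comm' (t' := Finset.range m) (s' := fun i => Finset.Ico i m) fun k i => by
    simp only [Finset.mem_range, Finset.mem_Ico]; omega]
  exact Finset.sum_congr rfl fun i _ => Finset.sum_congr rfl fun k _ => by ring

theorem natDegree_gegParitySum_le (hlam : -(1 / 2 : ℝ) < lam) (hr : r < 2) (m : ℕ) (x : ℕ → ℝ) :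
    (gegParitySum lam r m x).natDegree ≤ 2 * m := by
  refine natDegree_sum_le_of_forall_le _ _ fun k hk => (natDegree_C_mul_le _ _).trans ?_
  rw [natDegree_eq_of_degree_eq_some (degree_geg hlam _)]
  have := Finset.mem_range.1 hk
  omega

theorem sum_range_two_mul {M : Type*} [AddCommMonoid M] (f : ℕ → M) (m : ℕ) :
    ∑ k ∈ Finset.range (2 * m), f k =
      ∑ i ∈ Finset.range m, f (2 * i) + ∑ i ∈ Finset.range m, f (2 * i + 1) := by
  induction m with
  | zero => simp
  | succ m ih =>
    simp only [mul_add_one, Finset.sum_range_succ, ih]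
    abel

theorem exists_eq_add_gegParitySum_add_gegParitySum (hlam : -(1 / 2 : ℝ) < lam) {m : ℕ} {p : ℝ[X]}
    (hp : p.natDegree ≤ 2 * m) :
    ∃ a x y, p = C a + (gegParitySum lam 0 m x + gegParitySum lam 1 m y) := by
  obtain ⟨a, rfl⟩ := exists_eq_sum_geg hlam (Nat.lt_succ_of_le hp)
  refine ⟨a 0, fun k => a (2 * k + 1), fun k => a (2 * k + 2), ?_⟩
  rw [Finset.sum_range_succ', sum_range_two_mul, add_comm]
  simp [gegParitySum, geg]

variable (hlam : -(1 / 2 : ℝ) < lam)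

/-- The weights on the derivative side of the Hardy inequality, on indices of parity `r`. -/
noncomputable def hardyLeft (r i : ℕ) : ℝ :=
  gegSq hlam (2 * i + r) * gegDerivCoeff lam (2 * i + r) ^ 2

/-- The weights on the function side of the Hardy inequality, on indices of parity `r + 1`. -/
noncomputable def hardyRight (r i : ℕ) : ℝ := gegSq hlam (2 * i + r + 1)

theorem gegInt_gegParitySum_sq (r m : ℕ) (x : ℕ → ℝ) :
    gegInt hlam (gegParitySum lam r m x ^ 2) =
      ∑ k ∈ Finset.range m, hardyRight hlam r k * x k ^ 2 :=
  gegInt_sum_geg_sq hlam _ x fun i _ j _ (h : 2 * i + r + 1 = 2 * j + r + 1) => by omega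

theorem gegInt_derivative_gegParitySum_sq (hr : r < 2) (m : ℕ) (x : ℕ → ℝ) :
    gegInt hlam (derivative (gegParitySum lam r m x) ^ 2) =
      ∑ i ∈ Finset.range m, hardyLeft hlam r i * (∑ k ∈ Finset.Ico i m, x k) ^ 2 := by
  rw [derivative_gegParitySum hr, gegInt_sum_geg_sq hlam _ _
    fun i _ j _ (h : 2 * i + r = 2 * j + r) => by omega]
  simp only [hardyLeft, mul_pow, mul_assoc]

theorem gegInt_C_add_gegParitySum_add_sq (a : ℝ) (m : ℕ) (x y : ℕ → ℝ) :
    gegInt hlam ((C a + (gegParitySum lam 0 m x + gegParitySum lam 1 m y)) ^ 2) =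
      gegInt hlam (C a ^ 2) +
        (∑ k ∈ Finset.range m, hardyRight hlam 0 k * x k ^ 2 +
          ∑ k ∈ Finset.range m, hardyRight hlam 1 k * y k ^ 2) := by
  have hconst (r : ℕ) (x : ℕ → ℝ) : gegInt hlam (C a * gegParitySum lam r m x) = 0 := by
    simpa [geg, gegParitySum] using
      gegInt_sum_geg_mul_sum_geg_eq_zero hlam (s := {0}) (t := Finset.range m) (fun _ => a) x
        (e := fun i => i) (f := fun k => 2 * k + r + 1) (by simp)
  have hparity : gegInt hlam (gegParitySum lam 0 m x * gegParitySum lam 1 m y) = 0 :=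
    gegInt_sum_geg_mul_sum_geg_eq_zero hlam x y fun i _ j _ => by omega
  rw [gegInt_add_sq_of_mul_eq_zero hlam (by rw [mul_add, map_add, hconst, hconst, add_zero]),
    gegInt_add_sq_of_mul_eq_zero hlam hparity, gegInt_gegParitySum_sq, gegInt_gegParitySum_sq]

theorem gegInt_derivative_C_add_gegParitySum_add_sq (a : ℝ) (m : ℕ) (x y : ℕ → ℝ) :
    gegInt hlam
        (derivative (C a + (gegParitySum lam 0 m x + gegParitySum lam 1 m y)) ^ 2) =
      ∑ i ∈ Finset.range m, hardyLeft hlam 0 i * (∑ k ∈ Finset.Ico i m, x k) ^ 2 +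
        ∑ i ∈ Finset.range m, hardyLeft hlam 1 i * (∑ k ∈ Finset.Ico i m, y k) ^ 2 := by
  have hparity : gegInt hlam
      (derivative (gegParitySum lam 0 m x) * derivative (gegParitySum lam 1 m y)) = 0 := by
    rw [derivative_gegParitySum two_pos, derivative_gegParitySum one_lt_two]
    exact gegInt_sum_geg_mul_sum_geg_eq_zero hlam _ _ fun i _ j _ => by omega
  rw [derivative_add, derivative_C, zero_add, derivative_add,
    gegInt_add_sq_of_mul_eq_zero hlam hparity,
    gegInt_derivative_gegParitySum_sq hlam two_pos,
    gegInt_derivative_gegParitySum_sq hlam one_lt_two]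

end Parity

section GegenbauerAsymptotics

theorem powAsymp_prod_add_div_factorial {a : ℝ} (ha : Real.Gamma a ≠ 0) :
    PowAsymp (fun n => (∏ j ∈ Finset.range (n + 1), (a + j)) / n.factorial) a
      (Real.Gamma a)⁻¹ := by
  refine ((Real.GammaSeq_tendsto_Gamma a).inv₀ ha).congr fun n => ?_
  rw [Real.GammaSeq, inv_div, div_div, mul_comm]

variable {lam : ℝ} (hlam : -(1 / 2 : ℝ) < lam)

theorem powAsymp_gegSq :
    PowAsymp (gegSq hlam) (2 * lam - 2) (2 * gegSq hlam 0 / Real.Gamma (2 * lam + 1)) := by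
  have hΓ : Real.Gamma (2 * lam + 1) ≠ 0 := (Real.Gamma_pos_of_pos (by linarith)).ne'
  have hlin (t : ℝ) : PowAsymp (fun n => n + t) 1 1 := by
    simpa only [one_mul] using PowAsymp.mul_natCast_add 1 t
  have hquot := ((powAsymp_prod_add_div_factorial hΓ).const_mul (2 * gegSq hlam 0)).div
    (((hlin 1).mul (hlin 2)).mul (hlin (2 + lam))) (by norm_num)
  refine .of_comp_add (b := 2) ((hquot.congr fun n => ?_).of_eq (by ring) (by ring))
  have hprod := gegSq_succ_eq_prod hlam (n + 1)
  have hn : 0 < n + (2 + lam) := by linarith [n.cast_nonneg (α := ℝ)]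
  rw [Nat.factorial_succ, Nat.factorial_succ] at hprod
  push_cast at hprod
  field_simp
  linear_combination -hprod

theorem powAsymp_gegDerivCoeff (lam : ℝ) : PowAsymp (gegDerivCoeff lam) 1 2 :=
  PowAsymp.of_comp_add (b := 1) <| (PowAsymp.mul_natCast_add 2 (2 * (1 + lam))).congr fun n => by
    rw [gegDerivCoeff_succ]
    ring

theorem exists_powerWeights_hardy :
    ∃ η, ∀ r, PowerWeights (hardyLeft hlam r) (hardyRight hlam r) (2 * lam + 1) 4 16 η := by
  set c := 2 * gegSq hlam 0 / Real.Gamma (2 * lam + 1)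
  have hc : 0 < c :=
    div_pos (mul_pos two_pos (gegSq_pos hlam 0)) (Real.Gamma_pos_of_pos (by linarith))
  have hsq : PowAsymp (gegSq hlam) (2 * lam - 2) c := powAsymp_gegSq hlam
  refine ⟨c * 2 ^ (2 * lam - 2), fun r => ⟨fun i => ?_, fun i => gegSq_pos hlam _, by positivity,
    ?_, (hsq.comp_mul_add two_pos (r + 1)).of_eq (by ring) (by norm_num)⟩⟩
  · exact mul_nonneg (gegSq_pos hlam _).le (sq_nonneg _)
  · refine ((hsq.mul (powAsymp_gegDerivCoeff lam).sq).comp_mul_add two_pos r).of_eq (by ring) ?_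
    rw [Real.rpow_add (by norm_num), Nat.cast_ofNat]
    norm_num
    ring

end GegenbauerAsymptotics

/-! ### The Markov constant -/

section Markov

variable {lam : ℝ} (hlam : -(1 / 2 : ℝ) < lam)

/-- `C` is an admissible constant in the squared Markov inequality for polynomials of degree at most
`n`. -/
def IsMarkovConst (n : ℕ) (C : ℝ) : Prop :=
  ∀ p : ℝ[X], p.natDegree ≤ n → gegInt hlam (derivative p ^ 2) ≤ C * gegInt hlam (p ^ 2)

variable {hlam} in
theorem IsMarkovConst.anti {n n' : ℕ} {C : ℝ} (h : IsMarkovConst hlam n C) (hn : n' ≤ n) :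
    IsMarkovConst hlam n' C :=
  fun p hp => h p (hp.trans hn)

theorem isMarkovConst_two_mul_iff {m : ℕ} {C : ℝ} (hC : 0 ≤ C) :
    IsMarkovConst hlam (2 * m) C ↔
      ∀ r < 2, IsHardyConst (hardyLeft hlam r) (hardyRight hlam r) m C := by
  refine ⟨fun h r hr x => ?_, fun h p hp => ?_⟩
  · simpa only [gegInt_gegParitySum_sq, gegInt_derivative_gegParitySum_sq hlam hr] using
      h _ (natDegree_gegParitySum_le hlam hr m x)
  · obtain ⟨a, x, y, rfl⟩ := exists_eq_add_gegParitySum_add_gegParitySum hlam hp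
    rw [gegInt_derivative_C_add_gegParitySum_add_sq, gegInt_C_add_gegParitySum_add_sq, mul_add,
      mul_add]
    have := mul_nonneg hC (gegInt_sq_nonneg hlam (Polynomial.C a))
    linarith [h 0 two_pos x, h 1 one_lt_two y]

theorem exists_isMarkovConst (n : ℕ) : ∃ C, 0 ≤ C ∧ IsMarkovConst hlam n C := by
  have hpos r i : 0 < hardyRight hlam r i := gegSq_pos hlam _
  set K : ℕ → ℝ := fun r => √(hardyFrobeniusSq (hardyLeft hlam r) (hardyRight hlam r) n)
  refine ⟨max (K 0) (K 1), le_max_of_le_left (Real.sqrt_nonneg _), .anti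
    ((isMarkovConst_two_mul_iff hlam (le_max_of_le_left (Real.sqrt_nonneg _))).2 fun r hr => ?_)
    (by omega : n ≤ 2 * n)⟩
  refine (isHardyConst_sqrt_hardyFrobeniusSq (hpos r) n).mono (hpos r) ?_
  interval_cases r
  exacts [le_max_left _ _, le_max_right _ _]

theorem isMarkovConst_iff_gegNorm_div_le {n : ℕ} {C : ℝ} (hC : 0 ≤ C) :
    IsMarkovConst hlam n C ↔ ∀ p : ℝ[X], p ≠ 0 → p.natDegree ≤ n →
      gegNorm lam (fun x => (derivative p).eval x) / gegNorm lam (fun x => p.eval x) ≤ √C := by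
  refine ⟨fun h p hp hdeg => ?_, fun h p hdeg => ?_⟩
  · rw [gegNorm_eval hlam, gegNorm_eval hlam, ← Real.sqrt_div' _ (gegInt_sq_nonneg hlam p)]
    exact Real.sqrt_le_sqrt ((div_le_iff₀ (gegInt_sq_pos hlam hp)).2 (h p hdeg))
  · rcases eq_or_ne p 0 with rfl | hp
    · simp
    · have := h p hp hdeg
      rwa [gegNorm_eval hlam, gegNorm_eval hlam, ← Real.sqrt_div' _ (gegInt_sq_nonneg hlam p),
        Real.sqrt_le_sqrt_iff hC, div_le_iff₀ (gegInt_sq_pos hlam hp)] at this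

theorem markovConst_nonneg (lam : ℝ) (n : ℕ) : 0 ≤ markovConst lam n := by
  refine Real.sSup_nonneg ?_
  rintro _ ⟨p, -, -, rfl⟩
  exact div_nonneg (gegNorm_nonneg lam _) (gegNorm_nonneg lam _)

theorem sq_markovConst_le_iff {n : ℕ} {C : ℝ} (hC : 0 ≤ C) :
    markovConst lam n ^ 2 ≤ C ↔ IsMarkovConst hlam n C := by
  obtain ⟨C', hC', hMarkov⟩ := exists_isMarkovConst hlam n
  have hbdd : BddAbove {r : ℝ | ∃ p : ℝ[X], p ≠ 0 ∧ p.natDegree ≤ n ∧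
      r = gegNorm lam (fun x => (derivative p).eval x) / gegNorm lam (fun x => p.eval x)} := by
    refine ⟨√C', ?_⟩
    rintro _ ⟨p, hp, hdeg, rfl⟩
    exact (isMarkovConst_iff_gegNorm_div_le hlam hC').1 hMarkov p hp hdeg
  rw [← Real.le_sqrt (markovConst_nonneg lam n) hC, markovConst,
    csSup_le_iff hbdd ⟨_, 1, one_ne_zero, by simp, rfl⟩, isMarkovConst_iff_gegNorm_div_le hlam hC]
  refine ⟨fun h p hp hdeg => h _ ⟨p, hp, hdeg, rfl⟩, ?_⟩
  rintro h _ ⟨p, hp, hdeg, rfl⟩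
  exact h p hp hdeg

theorem isHardyConst_sq_markovConst {m n r : ℕ} (hr : r < 2) (hmn : 2 * m ≤ n) :
    IsHardyConst (hardyLeft hlam r) (hardyRight hlam r) m (markovConst lam n ^ 2) :=
  (isMarkovConst_two_mul_iff hlam (sq_nonneg _)).1
    (((sq_markovConst_le_iff hlam (sq_nonneg _)).1 le_rfl).anti hmn) r hr

theorem sq_markovConst_le_of_isHardyConst {m n : ℕ} {C : ℝ} (hC : 0 ≤ C) (hnm : n ≤ 2 * m)
    (h : ∀ r < 2, IsHardyConst (hardyLeft hlam r) (hardyRight hlam r) m C) :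
    markovConst lam n ^ 2 ≤ C :=
  (sq_markovConst_le_iff hlam hC).2 (((isMarkovConst_two_mul_iff hlam hC).2 h).anti hnm)

theorem eventually_sq_markovConst_div_le {K c : ℝ} (hK : 0 ≤ K)
    (h : ∀ r < 2, HardyBound (hardyLeft hlam r) (hardyRight hlam r) 4 K) (hc : K / 16 < c) :
    ∀ᶠ n : ℕ in atTop, markovConst lam n ^ 2 / (n : ℝ) ^ 4 ≤ c := by
  obtain ⟨C, hKC, hCc⟩ : ∃ C, K < C ∧ C < c * 16 :=
    exists_between ((div_lt_iff₀ (by norm_num)).1 hc)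
  have hhardy : ∀ᶠ m : ℕ in atTop, ∀ r < 2,
      IsHardyConst (hardyLeft hlam r) (hardyRight hlam r) m (C * (m : ℝ) ^ (4 : ℝ)) :=
    (Set.finite_Iio 2).eventually_all.2 fun r hr => h r hr C hKC
  have hhalf : Tendsto (fun n => (n + 1) / 2) atTop atTop :=
    (Nat.tendsto_div_const_atTop two_ne_zero).comp (tendsto_add_atTop_nat 1)
  have hpow : PowAsymp (fun n => C * (((n + 1) / 2 : ℕ) : ℝ) ^ (4 : ℝ)) 4 (C / 16) :=
    (((PowAsymp.rpow 4).comp (by norm_num) (PowAsymp.natCast_half.comp_add 1)).const_mul C).of_eq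
      rfl (by norm_num; ring)
  filter_upwards [hhalf.eventually hhardy,
    hpow.eventually_le_mul_rpow ((div_lt_iff₀ (by norm_num)).2 hCc), eventually_gt_atTop 0]
    with n hn hle hn0
  have hC : 0 < C := hK.trans_lt hKC
  rw [div_le_iff₀ (by positivity), ← Real.rpow_ofNat (n : ℝ)]
  refine le_trans ?_ hle
  exact sq_markovConst_le_of_isHardyConst hlam (by positivity) (by omega) hn

theorem limsup_sq_markovConst_div_le {K : ℝ} (hK : 0 ≤ K)
    (h : ∀ r < 2, HardyBound (hardyLeft hlam r) (hardyRight hlam r) 4 K) :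
    limsup (fun n : ℕ => markovConst lam n ^ 2 / (n : ℝ) ^ 4) atTop ≤ K / 16 :=
  le_of_forall_gt_imp_ge_of_dense fun _ hc => limsup_le_of_le
    (isBoundedUnder_of ⟨0, fun _ => by positivity⟩ : IsBoundedUnder (· ≥ ·) _ _).isCoboundedUnder_le
    (eventually_sq_markovConst_div_le hlam hK h hc)

theorem le_liminf_sq_markovConst_div {L : ℝ}
    (hL : PowAsymp (hardyPowQuotient (hardyLeft hlam 0) (hardyRight hlam 0) 4) 4 L)
    (hbdd : IsBoundedUnder (· ≤ ·) atTop fun n : ℕ => markovConst lam n ^ 2 / (n : ℝ) ^ 4) :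
    L / 16 ≤ liminf (fun n : ℕ => markovConst lam n ^ 2 / (n : ℝ) ^ 4) atTop := by
  have hlim : PowAsymp
      (fun n => hardyPowQuotient (hardyLeft hlam 0) (hardyRight hlam 0) 4 (n / 2)) 4 (L / 16) :=
    (hL.comp (by norm_num) PowAsymp.natCast_half).of_eq rfl (by norm_num; ring)
  rw [← hlim.liminf_eq]
  refine liminf_le_liminf ?_ hlim.isBoundedUnder_ge hbdd.isCoboundedUnder_ge
  filter_upwards [eventually_ge_atTop 2] with n hn
  rw [Real.rpow_ofNat]
  gcongr
  exact (isHardyConst_sq_markovConst hlam two_pos (by omega)).hardyPowQuotient_le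
    (fun _ => gegSq_pos hlam _) (by norm_num) (by omega)

end Markov

theorem asymptotic_markov_constant_bounds_general (lam : ℝ) (hlam : -(1 / 2 : ℝ) < lam) :
    2 / ((2 * lam + 1) * (2 * lam + 9))
      ≤ liminf (fun n : ℕ => markovConst lam n ^ 2 / (n : ℝ) ^ 4) atTop ∧
    limsup (fun n : ℕ => markovConst lam n ^ 2 / (n : ℝ) ^ 4) atTop
      ≤ 1 / (2 * (2 * lam + 1) * √(2 * lam + 5)) ∧
    (3 / 2 < lam →
      limsup (fun n : ℕ => markovConst lam n ^ 2 / (n : ℝ) ^ 4) atTop ≤ 1 / (lam + 5 / 2) ^ 2) := by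
  have hs : 0 < 2 * lam + 1 := by linarith
  obtain ⟨η, hη⟩ := exists_powerWeights_hardy hlam
  have hfrob r (_ : r < 2) := (hη r).hardyBound_frobenius hs four_pos (by norm_num)
  refine ⟨?_, ?_, fun hlam' => ?_⟩
  · convert le_liminf_sq_markovConst_div hlam ((hη 0).powAsymp_hardyPowQuotient hs four_pos)
      (isBoundedUnder_of_eventually_le
        (eventually_sq_markovConst_div_le hlam (by positivity) hfrob (lt_add_one _))) using 1
    rw [show 2 * lam + 1 + 2 * 4 = 2 * lam + 9 by ring]
    ring
  · convert limsup_sq_markovConst_div_le hlam (by positivity) hfrob using 1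
    rw [show 4 * (2 * lam + 1 + 4) = 2 ^ 2 * (2 * lam + 5) by ring, Real.sqrt_mul (by norm_num),
      Real.sqrt_sq zero_le_two, div_right_comm, div_self (by norm_num), ← mul_assoc,
      mul_comm 2 (2 * lam + 1)]
  · have hden : (2 * lam + 1 - (lam - 3 / 2)) * (4 + (lam - 3 / 2)) = (lam + 5 / 2) ^ 2 := by ring
    have hschur r (_ : r < 2) := hden ▸ (hη r).hardyBound_schur four_pos (by norm_num)
      (q := lam - 3 / 2) (by linarith) (by linarith)
    convert limsup_sq_markovConst_div_le hlam (by positivity) hschur using 1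
    ring

theorem asymptotic_markov_constant_bounds (lam : ℝ) (hlam : -(1/2 : ℝ) < lam) :
    1 / ((2*lam + 1) * (2*lam + 5))
      ≤ Filter.liminf (fun n : ℕ => (markovConst lam n)^2 / (n : ℝ)^4) Filter.atTop ∧
    Filter.limsup (fun n : ℕ => (markovConst lam n)^2 / (n : ℝ)^4) Filter.atTop
      ≤ 1 / (2 * (2*lam + 1) * Real.sqrt (2*lam + 5)) ∧
    (2 ≤ lam →
      Filter.limsup (fun n : ℕ => (markovConst lam n)^2 / (n : ℝ)^4) Filter.atTop
        ≤ 1 / ((lam + 2) * (lam + 3))) := by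
  obtain ⟨hlower, hupper, hupper'⟩ := asymptotic_markov_constant_bounds_general lam hlam
  refine ⟨le_trans ?_ hlower, hupper, fun h => (hupper' (by linarith)).trans ?_⟩
  · have : 0 < 2 * lam + 1 := by linarith
    rw [div_le_div_iff₀ (by nlinarith) (by nlinarith)]
    nlinarith
  · exact one_div_le_one_div_of_le (by nlinarith) (by nlinarith)
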